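/- Fix α > −1 and an integer n ≥ 1, and define H_n(t) := t · d/dt log( D_n(t, α) / D_n(0, α) ) for t > 0. Then H_n is twice differentiable on (0,∞) and satisfies, for all t > 0, the Jimbo–Miwa–Okamoto σ-form of Painlevé V: ( t H_n'' )² = 4 ( H_n' )² ( H_n − n(n+α) − t H_n' ) + ( (2n + α − t) H_n' + H_n )², where primes denote derivatives with respect to t. -/

import Mathlib

open MeasureTheory

/-- The `n × n` Hankel determinant of the Laguerre weight `x^α e^{-x}`
restricted to `[t, ∞)`. -/
noncomputable def laguerreHankel (n : ℕ) (t α : ℝ) : ℝ :=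
  Matrix.det (Matrix.of fun i j : Fin n =>
    ∫ x in Set.Ioi t, x ^ (((i : ℕ) : ℝ) + ((j : ℕ) : ℝ) + α) * Real.exp (-x))

/-!
Let `P_n` be the monic orthogonal polynomials of the truncated weight `x^α e^{-x}` on `(t, ∞)`,
`h_n` their squared norms, `p_n` their subleading coefficients and `β = h_{n+1} / h_n`. Then
`D_n = ∏_{j < n} h_j`, and differentiating in `t` only produces the boundary quantities
`R_n = t^α e^{-t} P_n(t)² / h_n` and `r = t^α e^{-t} P_{n+1}(t) P_n(t) / h_n`, namely
`h_n' = -R_n h_n`, `p_{n+1}' = r` and `β' = β (R_n - R_{n+1})`. Integration by parts ties these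
together:
* `-t R_n = 2 n + 1 + α + p_{n+1} - p_n`, which telescopes to `t (log D_n)' = n (n + α) + p_n`;
* `β + p_{n+1} = t r`, which differentiates to `t r' = β'`;
* `β (R_n + R_{n+1}) = β - (n + 1) (n + 1 + α) - (2 (n + 1) + α) r`.

So `H = t (log D_{n+1})'` has `H' = r` and `t H'' = β (R_n - R_{n+1})`; as `r² = β R_n R_{n+1}`, the
σ-form of Painlevé V is the identity `β² (R_n - R_{n+1})² = β² (R_n + R_{n+1})² - 4 β r²`.
-/

open Polynomial Filter Set
open scoped Topology

section OrthogonalPolynomials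

variable {K : Type*} [Field K]

theorem degree_sub_coeff_smul_lt {R : Type*} [Ring R] {f p : R[X]} {n : ℕ} (hp : p.Monic)
    (hpn : p.natDegree = n) (hf : f.natDegree ≤ n) : (f - f.coeff n • p).degree < n := by
  rw [degree_lt_iff_coeff_zero]
  intro k hk
  rw [coeff_sub, coeff_smul, smul_eq_mul]
  rcases hk.eq_or_lt with rfl | hk
  · rw [← hpn, hp.coeff_natDegree, mul_one, sub_self]
  · rw [coeff_eq_zero_of_natDegree_lt (hf.trans_lt hk),
      coeff_eq_zero_of_natDegree_lt (hpn.trans_lt hk), mul_zero, sub_zero]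

theorem map_mul_eq_sum_coeff {R : Type*} [CommSemiring R] (L : R[X] →ₗ[R] R) {f : R[X]} {N : ℕ}
    (hf : f.natDegree < N) (g : R[X]) :
    L (f * g) = ∑ k ∈ Finset.range N, f.coeff k * L (X ^ k * g) := by
  conv_lhs => rw [as_sum_range_C_mul_X_pow' f hf, Finset.sum_mul, map_sum]
  simp only [C_mul', map_smul, smul_mul_assoc, smul_eq_mul]

/-- The monic orthogonal polynomial of degree `n` of a moment functional `L`, obtained from the
monomials by Gram–Schmidt orthogonalization for the symmetric form `(f, g) ↦ L (f * g)`.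
Meaningful when `L` is quasi-definite: otherwise a division by zero may occur. -/
noncomputable def orthPoly (L : K[X] →ₗ[K] K) (n : ℕ) : K[X] :=
  X ^ n - ∑ j : Fin n,
    (L (orthPoly L j * X ^ n) / L (orthPoly L j * orthPoly L j)) • orthPoly L j

/-- The squared norm `L (P * P)` of the monic orthogonal polynomial `P` of degree `n`. -/
noncomputable def sqNorm (L : K[X] →ₗ[K] K) (n : ℕ) : K := L (orthPoly L n * orthPoly L n)

/-- A moment functional is quasi-definite if it has an orthogonal polynomial of nonzero norm in
every degree, so that the Gram–Schmidt process never breaks down. -/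
def IsQuasiDefinite (L : K[X] →ₗ[K] K) : Prop := ∀ n, sqNorm L n ≠ 0

/-- The Hankel matrix of the moments of `L`. -/
noncomputable def hankelMatrix (L : K[X] →ₗ[K] K) (n : ℕ) :
    Matrix (Fin n) (Fin n) K :=
  Matrix.of fun i j => L (X ^ ((i : ℕ) + (j : ℕ)))

variable (L : K[X] →ₗ[K] K)

theorem orthPoly_eq_sub_sum (n : ℕ) : orthPoly L n =
    X ^ n - ∑ j ∈ Finset.range n, (L (orthPoly L j * X ^ n) / sqNorm L j) • orthPoly L j := by
  rw [orthPoly, Finset.sum_range]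
  rfl

theorem monic_orthPoly_and_natDegree (n : ℕ) :
    (orthPoly L n).Monic ∧ (orthPoly L n).natDegree = n := by
  induction n using Nat.strong_induction_on with
  | _ n ih =>
    have hlt : (∑ j ∈ Finset.range n,
        (L (orthPoly L j * X ^ n) / sqNorm L j) • orthPoly L j).degree < n := by
      rw [← mem_degreeLT]
      refine Submodule.sum_mem _ fun j hj => ?_
      have hj := Finset.mem_range.1 hj
      refine Submodule.smul_mem _ _ (mem_degreeLT.2 ?_)
      exact degree_le_natDegree.trans_lt (by exact_mod_cast (ih j hj).2.trans_lt hj)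
    rw [orthPoly_eq_sub_sum]
    refine ⟨monic_X_pow_sub hlt, natDegree_eq_of_degree_eq_some ?_⟩
    rw [degree_sub_eq_left_of_degree_lt (by rwa [degree_X_pow]), degree_X_pow]

theorem monic_orthPoly (n : ℕ) : (orthPoly L n).Monic := (monic_orthPoly_and_natDegree L n).1

@[simp]
theorem natDegree_orthPoly (n : ℕ) : (orthPoly L n).natDegree = n :=
  (monic_orthPoly_and_natDegree L n).2

@[simp]
theorem coeff_orthPoly_self (n : ℕ) : (orthPoly L n).coeff n = 1 := by
  simpa using (monic_orthPoly L n).coeff_natDegree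

theorem coeff_orthPoly_of_lt {n k : ℕ} (h : n < k) : (orthPoly L n).coeff k = 0 :=
  coeff_eq_zero_of_natDegree_lt (by simpa using h)

theorem nextCoeff_orthPoly_zero : (orthPoly L 0).nextCoeff = 0 := by simp [nextCoeff]

theorem nextCoeff_orthPoly_succ (n : ℕ) :
    (orthPoly L (n + 1)).nextCoeff = (orthPoly L (n + 1)).coeff n := by
  simp [nextCoeff_of_natDegree_pos]

variable {L} (hL : IsQuasiDefinite L)
include hL

theorem IsQuasiDefinite.map_orthPoly_mul_orthPoly {m n : ℕ} (h : m < n) :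
    L (orthPoly L n * orthPoly L m) = 0 := by
  induction n using Nat.strong_induction_on generalizing m with
  | _ n ih =>
    have orth : ∀ j ∈ Finset.range n, j ≠ m → L (orthPoly L j * orthPoly L m) = 0 := by
      intro j hj hjm
      rcases hjm.lt_or_gt with hlt | hgt
      · rw [mul_comm, ih m h hlt]
      · exact ih j (Finset.mem_range.1 hj) hgt
    rw [orthPoly_eq_sub_sum, sub_mul, Finset.sum_mul, map_sub, map_sum,
      Finset.sum_eq_single_of_mem m (Finset.mem_range.2 h)]
    · rw [smul_mul_assoc, map_smul, smul_eq_mul, ← sqNorm, div_mul_cancel₀ _ (hL m), mul_comm,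
        sub_self]
    · intro j hj hjm
      rw [smul_mul_assoc, map_smul, orth j hj hjm, smul_zero]

theorem IsQuasiDefinite.map_orthPoly_mul_eq_zero {f : K[X]} {n : ℕ} (hf : f.degree < n) :
    L (orthPoly L n * f) = 0 := by
  suffices ∀ k ≤ n, ∀ f : K[X], f.degree < k → L (orthPoly L n * f) = 0 from this n le_rfl f hf
  intro k hk
  induction k with
  | zero =>
    intro f hf
    rw [degree_eq_bot.1 (Nat.WithBot.lt_zero_iff.1 hf), mul_zero, map_zero]
  | succ k ih =>
    intro f hf
    have hlow := ih (by omega) _ (degree_sub_coeff_smul_lt (monic_orthPoly L k)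
      (natDegree_orthPoly L k)
      (natDegree_le_iff_coeff_eq_zero.2 ((degree_lt_iff_coeff_zero f _).1 hf)))
    rwa [mul_sub, mul_smul_comm, map_sub, map_smul,
      hL.map_orthPoly_mul_orthPoly (by omega), smul_zero, sub_zero] at hlow

theorem IsQuasiDefinite.map_orthPoly_mul {f : K[X]} {n : ℕ} (hf : f.natDegree ≤ n) :
    L (orthPoly L n * f) = f.coeff n * sqNorm L n := by
  have hlow := hL.map_orthPoly_mul_eq_zero
    (degree_sub_coeff_smul_lt (monic_orthPoly L n) (natDegree_orthPoly L n) hf)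
  rwa [mul_sub, mul_smul_comm, map_sub, map_smul, sub_eq_zero] at hlow

theorem IsQuasiDefinite.map_orthPoly_mul_X_mul_orthPoly (n : ℕ) :
    L (orthPoly L n * (X * orthPoly L n)) =
      ((orthPoly L n).nextCoeff - (orthPoly L (n + 1)).nextCoeff) * sqNorm L n := by
  have hcoeff : (X * orthPoly L n).coeff n = (orthPoly L n).nextCoeff := by
    cases n with
    | zero => rw [coeff_X_mul_zero, nextCoeff_orthPoly_zero]
    | succ n => rw [coeff_X_mul, nextCoeff_orthPoly_succ]
  have hdeg : (X * orthPoly L n - orthPoly L (n + 1)).natDegree ≤ n := by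
    rw [natDegree_le_iff_coeff_eq_zero]
    intro k hk
    obtain ⟨k, rfl⟩ := Nat.exists_eq_succ_of_ne_zero hk.ne_bot
    rw [coeff_sub, coeff_X_mul]
    rcases (Nat.lt_succ_iff.1 hk).eq_or_lt with rfl | hk
    · simp
    · rw [coeff_orthPoly_of_lt L hk, coeff_orthPoly_of_lt L (Nat.succ_lt_succ hk), sub_zero]
  rw [← sub_add_cancel (X * orthPoly L n) (orthPoly L (n + 1)), mul_add, map_add,
    hL.map_orthPoly_mul hdeg, coeff_sub, hcoeff, nextCoeff_orthPoly_succ,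
    mul_comm (orthPoly L n) (orthPoly L _), hL.map_orthPoly_mul_orthPoly n.lt_succ_self, add_zero]

theorem IsQuasiDefinite.det_hankelMatrix (n : ℕ) :
    (hankelMatrix L n).det = ∏ j ∈ Finset.range n, sqNorm L j := by
  set A : Matrix (Fin n) (Fin n) K := Matrix.of fun i j => (orthPoly L j).coeff i with hA
  have hdet : A.det = 1 := Matrix.det_matrixOfPolynomials (fun j : Fin n => orthPoly L j)
    (fun j => natDegree_orthPoly L j) fun j => monic_orthPoly L j
  have hgram : A.transpose * hankelMatrix L n * A =
      Matrix.diagonal fun j : Fin n => sqNorm L j := by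
    ext i j
    have hdeg (k : Fin n) : (orthPoly L k).natDegree < n := by simp
    have hentry : (A.transpose * hankelMatrix L n * A) i j = L (orthPoly L i * orthPoly L j) := by
      rw [mul_comm, map_mul_eq_sum_coeff L (hdeg j), Finset.sum_range, Matrix.mul_apply]
      refine Finset.sum_congr rfl fun l _ => ?_
      rw [mul_comm (X ^ _), map_mul_eq_sum_coeff L (hdeg i), Finset.sum_range, Matrix.mul_apply,
        mul_comm]
      simp [hA, hankelMatrix, pow_add]
    rw [hentry, Matrix.diagonal_apply]
    split_ifs with hij
    · rw [hij, sqNorm]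
    · rcases (Fin.val_ne_of_ne hij).lt_or_gt with hlt | hgt
      · rw [mul_comm, hL.map_orthPoly_mul_orthPoly hlt]
      · exact hL.map_orthPoly_mul_orthPoly hgt
  have := congrArg Matrix.det hgram
  rwa [Matrix.det_mul, Matrix.det_mul, Matrix.det_transpose, hdet, one_mul, mul_one,
    Matrix.det_diagonal, ← Finset.prod_range] at this

theorem IsQuasiDefinite.det_hankelMatrix_ne_zero (n : ℕ) : (hankelMatrix L n).det ≠ 0 := by
  rw [hL.det_hankelMatrix]
  exact Finset.prod_ne_zero_iff.2 fun j _ => hL j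

end OrthogonalPolynomials

section LaguerrePair

variable {K : Type*} [Field K]

theorem coeff_X_mul_derivative {R : Type*} [CommSemiring R] (f : R[X]) (k : ℕ) :
    (X * derivative f).coeff k = k * f.coeff k := by
  cases k with
  | zero => simp
  | succ k => rw [coeff_X_mul, coeff_derivative, mul_comm, Nat.cast_succ]

theorem natDegree_X_mul_derivative_le {R : Type*} [CommSemiring R] (f : R[X]) :
    (X * derivative f).natDegree ≤ f.natDegree :=
  natDegree_le_iff_coeff_eq_zero.2 fun k hk => by
    rw [coeff_X_mul_derivative, coeff_eq_zero_of_natDegree_lt hk, mul_zero]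

/-- The algebraic properties of the functionals `Λ f = ∫_t^∞ f(x) x^(α-1) e^(-x) dx` and
`L f = ∫_t^∞ f(x) x^α e^(-x) dx`, with `w = t^α e^(-t)`: the two weights differ by a factor `x`, and
`f(x) x^α e^(-x)` can be integrated by parts. -/
structure IsLaguerrePair (α t w : K) (Λ L : K[X] →ₗ[K] K) : Prop where
  map_X_mul : ∀ f, Λ (X * f) = L f
  parts : ∀ f, L (derivative f) + α * Λ f - L f = -(w * f.eval t)

/-- The ratio `h_{n+1} / h_n` of consecutive squared norms, the coefficient `β_{n+1}` of the
three-term recurrence. -/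
noncomputable def normRatio (L : K[X] →ₗ[K] K) (n : ℕ) : K := sqNorm L (n + 1) / sqNorm L n

/-- The boundary quantity `R_n = w P_n(t)² / h_n` of the ladder operator method. -/
noncomputable def boundarySquare (L : K[X] →ₗ[K] K) (t w : K) (n : ℕ) : K :=
  w * (orthPoly L n).eval t ^ 2 / sqNorm L n

/-- The boundary quantity `r_{n+1} = w P_{n+1}(t) P_n(t) / h_n` of the ladder operator method. -/
noncomputable def boundaryCross (L : K[X] →ₗ[K] K) (t w : K) (n : ℕ) : K :=
  w * (orthPoly L (n + 1)).eval t * (orthPoly L n).eval t / sqNorm L n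

variable {α t w : K} {Λ L : K[X] →ₗ[K] K}

theorem IsQuasiDefinite.boundaryCross_sq (hL : IsQuasiDefinite L) (t w : K) (n : ℕ) :
    boundaryCross L t w n ^ 2 =
      normRatio L n * boundarySquare L t w n * boundarySquare L t w (n + 1) := by
  have h₀ := hL n
  have h₁ := hL (n + 1)
  simp only [boundaryCross, normRatio, boundarySquare]
  field_simp

theorem IsQuasiDefinite.map_orthPoly_mul_derivative (hL : IsQuasiDefinite L) {m n : ℕ}
    (hn : n ≤ m + 1) : L (orthPoly L m * derivative (orthPoly L n)) =
      (m + 1) * (orthPoly L n).coeff (m + 1) * sqNorm L m := by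
  have hdeg : (derivative (orthPoly L n)).natDegree ≤ m :=
    (natDegree_derivative_le _).trans (by rw [natDegree_orthPoly]; omega)
  rw [hL.map_orthPoly_mul hdeg, coeff_derivative, mul_comm (coeff _ _)]

theorem IsQuasiDefinite.map_orthPoly_mul_X_mul_derivative (hL : IsQuasiDefinite L) (n : ℕ) :
    L (orthPoly L n * (X * derivative (orthPoly L n))) = n * sqNorm L n := by
  rw [hL.map_orthPoly_mul ((natDegree_X_mul_derivative_le _).trans_eq (natDegree_orthPoly L n)),
    coeff_X_mul_derivative, coeff_orthPoly_self, mul_one]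

theorem IsQuasiDefinite.map_orthPoly_mul_X_mul_derivative_succ (hL : IsQuasiDefinite L) (n : ℕ) :
    L (orthPoly L n * (X * derivative (orthPoly L (n + 1)))) =
      -((orthPoly L (n + 1)).nextCoeff * sqNorm L n) := by
  have hcoeff (k : ℕ) : (X * derivative (orthPoly L (n + 1)) -
      (n + 1 : K) • orthPoly L (n + 1)).coeff k = (k - (n + 1)) * (orthPoly L (n + 1)).coeff k := by
    rw [coeff_sub, coeff_X_mul_derivative, coeff_smul, smul_eq_mul, sub_mul]
  have hdeg : (X * derivative (orthPoly L (n + 1)) -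
      (n + 1 : K) • orthPoly L (n + 1)).natDegree ≤ n := by
    refine natDegree_le_iff_coeff_eq_zero.2 fun k hk => ?_
    rw [hcoeff]
    rcases (Nat.succ_le_of_lt hk).eq_or_lt with rfl | hk
    · rw [Nat.cast_succ, sub_self, zero_mul]
    · rw [coeff_orthPoly_of_lt L hk, mul_zero]
  have hmap := hL.map_orthPoly_mul hdeg
  rw [mul_sub, mul_smul_comm, map_sub, map_smul, mul_comm (orthPoly L n) (orthPoly L (n + 1)),
    hL.map_orthPoly_mul_orthPoly n.lt_succ_self, smul_zero, sub_zero, hcoeff] at hmap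
  rw [hmap, nextCoeff_orthPoly_succ]
  ring

namespace IsLaguerrePair

variable (hΛ : IsLaguerrePair α t w Λ L)
include hΛ

theorem map_mul (f g : K[X]) : Λ (f * g) = L (f * g.divX) + g.coeff 0 * Λ f := by
  conv_lhs => rw [← X_mul_divX_add g]
  rw [mul_add, map_add, mul_left_comm, hΛ.map_X_mul, mul_comm f (C _), C_mul', map_smul,
    smul_eq_mul]

theorem parts_X_mul (f : K[X]) :
    L f + L (X * derivative f) + α * L f - L (X * f) = -(t * w * f.eval t) := by
  have h := hΛ.parts (X * f)
  rw [derivative_mul, derivative_X, one_mul, map_add, hΛ.map_X_mul, eval_mul, eval_X] at h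
  rw [h]
  ring

variable (hL : IsQuasiDefinite L)
include hL

theorem boundarySquare_eq (n : ℕ) : -(t * boundarySquare L t w n) =
    2 * n + 1 + α + (orthPoly L (n + 1)).nextCoeff - (orthPoly L n).nextCoeff := by
  have h := hΛ.parts_X_mul (orthPoly L n * orthPoly L n)
  rw [show X * derivative (orthPoly L n * orthPoly L n) =
      orthPoly L n * (X * derivative (orthPoly L n)) +
        orthPoly L n * (X * derivative (orthPoly L n)) by rw [derivative_mul]; ring,
    map_add, hL.map_orthPoly_mul_X_mul_derivative, mul_left_comm X,
    hL.map_orthPoly_mul_X_mul_orthPoly, ← sqNorm, eval_mul] at h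
  have := hL n
  rw [boundarySquare]
  field_simp
  linear_combination -h

theorem normRatio_add_nextCoeff (n : ℕ) :
    normRatio L n + (orthPoly L (n + 1)).nextCoeff = t * boundaryCross L t w n := by
  have horth : L (orthPoly L (n + 1) * orthPoly L n) = 0 :=
    hL.map_orthPoly_mul_orthPoly n.lt_succ_self
  have hderiv : L (orthPoly L (n + 1) * (X * derivative (orthPoly L n))) = 0 := by
    refine hL.map_orthPoly_mul_eq_zero ((degree_lt_iff_coeff_zero _ _).2 fun k hk => ?_)
    rw [coeff_X_mul_derivative, coeff_orthPoly_of_lt L hk, mul_zero]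
  have hshift : L (orthPoly L (n + 1) * (X * orthPoly L n)) = sqNorm L (n + 1) := by
    have hdeg : (X * orthPoly L n).natDegree ≤ n + 1 := by
      simpa [add_comm] using natDegree_mul_le (p := (X : K[X])) (q := orthPoly L n)
    rw [hL.map_orthPoly_mul hdeg, coeff_X_mul, coeff_orthPoly_self, one_mul]
  have h := hΛ.parts_X_mul (orthPoly L (n + 1) * orthPoly L n)
  rw [show X * derivative (orthPoly L (n + 1) * orthPoly L n) =
      orthPoly L n * (X * derivative (orthPoly L (n + 1))) +
        orthPoly L (n + 1) * (X * derivative (orthPoly L n)) by rw [derivative_mul]; ring,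
    map_add, horth, hderiv, hL.map_orthPoly_mul_X_mul_derivative_succ, mul_left_comm X, hshift,
    eval_mul] at h
  have := hL n
  rw [normRatio, boundaryCross]
  field_simp
  linear_combination -h

theorem map_orthPoly_mul_orthPoly {m n : ℕ} (hn : n ≤ m + 1) : Λ (orthPoly L m * orthPoly L n) =
    (orthPoly L n).coeff (m + 1) * sqNorm L m + (orthPoly L n).coeff 0 * Λ (orthPoly L m) := by
  have hdeg : (orthPoly L n).divX.natDegree ≤ m := by
    rw [natDegree_divX_eq_natDegree_tsub_one, natDegree_orthPoly]
    omega
  rw [hΛ.map_mul, hL.map_orthPoly_mul hdeg, coeff_divX]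

theorem sqNorm_sub_eq (n : ℕ) : sqNorm L n - w * (orthPoly L n).eval t ^ 2 =
    α * ((orthPoly L n).coeff 0 * Λ (orthPoly L n)) := by
  have h := hΛ.parts (orthPoly L n * orthPoly L n)
  rw [derivative_mul, mul_comm (derivative _), map_add,
    hL.map_orthPoly_mul_derivative (Nat.le_succ n),
    hΛ.map_orthPoly_mul_orthPoly hL (Nat.le_succ n), coeff_orthPoly_of_lt L n.lt_succ_self,
    ← sqNorm, eval_mul] at h
  linear_combination -h

/-- Integration by parts evaluates each of the four factors as `± α F(0) Λ(G)` with
`F, G ∈ {P_n, P_{n+1}}`; on both sides the product is `α² P_n(0) P_{n+1}(0) Λ(P_n) Λ(P_{n+1})`. -/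
theorem sqNorm_sub_mul_sqNorm_sub (n : ℕ) :
    (sqNorm L (n + 1) - w * (orthPoly L (n + 1)).eval t ^ 2) *
        (sqNorm L n - w * (orthPoly L n).eval t ^ 2) =
      ((n + 1) * sqNorm L n + w * (orthPoly L (n + 1)).eval t * (orthPoly L n).eval t) *
        ((n + 1 + α) * sqNorm L n + w * (orthPoly L (n + 1)).eval t * (orthPoly L n).eval t) := by
  have hparts := hΛ.parts (orthPoly L (n + 1) * orthPoly L n)
  rw [derivative_mul, mul_comm (derivative _), map_add, hL.map_orthPoly_mul_derivative le_rfl,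
    hL.map_orthPoly_mul_derivative (by omega), hL.map_orthPoly_mul_orthPoly n.lt_succ_self,
    coeff_orthPoly_self, coeff_orthPoly_of_lt L (by omega : n < n + 1 + 1), eval_mul] at hparts
  have hleft := hΛ.map_orthPoly_mul_orthPoly hL (by omega : n ≤ n + 1 + 1)
  have hright := hΛ.map_orthPoly_mul_orthPoly hL (le_refl (n + 1))
  rw [coeff_orthPoly_of_lt L (by omega : n < n + 1 + 1)] at hleft
  rw [coeff_orthPoly_self, mul_comm (orthPoly L n)] at hright
  have hcross : (n + 1) * sqNorm L n + w * (orthPoly L (n + 1)).eval t * (orthPoly L n).eval t =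
      -(α * ((orthPoly L n).coeff 0 * Λ (orthPoly L (n + 1)))) := by
    linear_combination hparts - α * hleft
  have hcross' :
      (n + 1 + α) * sqNorm L n + w * (orthPoly L (n + 1)).eval t * (orthPoly L n).eval t =
        -(α * ((orthPoly L (n + 1)).coeff 0 * Λ (orthPoly L n))) := by
    linear_combination hparts - α * hright
  rw [hΛ.sqNorm_sub_eq hL, hΛ.sqNorm_sub_eq hL, hcross, hcross']
  ring

theorem normRatio_mul_boundarySquare_add (n : ℕ) :
    normRatio L n * (boundarySquare L t w n + boundarySquare L t w (n + 1)) =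
      normRatio L n - (n + 1) * (n + 1 + α) - (2 * (n + 1) + α) * boundaryCross L t w n := by
  have hprod := hΛ.sqNorm_sub_mul_sqNorm_sub hL n
  have h₀ := hL n
  have h₁ := hL (n + 1)
  simp only [normRatio, boundarySquare, boundaryCross]
  field_simp
  linear_combination -hprod

end IsLaguerrePair

end LaguerrePair

section Deformation

variable {𝕜 : Type*} [NontriviallyNormedField 𝕜] {t : 𝕜}

/-- The family of polynomials `P` is differentiable at `t` coefficientwise, with derivative the
polynomial `P'`. -/
def HasCoeffDerivAt (P : 𝕜 → 𝕜[X]) (P' : 𝕜[X]) (t : 𝕜) : Prop :=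
  ∀ k, HasDerivAt (fun s => (P s).coeff k) (P'.coeff k) t

namespace HasCoeffDerivAt

variable {P Q : 𝕜 → 𝕜[X]} {P' Q' : 𝕜[X]}

theorem const (p : 𝕜[X]) (t : 𝕜) : HasCoeffDerivAt (fun _ => p) 0 t := fun k => by
  rw [coeff_zero]
  exact hasDerivAt_const t _

theorem sub (hP : HasCoeffDerivAt P P' t) (hQ : HasCoeffDerivAt Q Q' t) :
    HasCoeffDerivAt (fun s => P s - Q s) (P' - Q') t := fun k => by
  simpa only [coeff_sub] using (hP k).fun_sub (hQ k)

theorem smul {c : 𝕜 → 𝕜} {c' : 𝕜} (hc : HasDerivAt c c' t) (hP : HasCoeffDerivAt P P' t) :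
    HasCoeffDerivAt (fun s => c s • P s) (c' • P t + c t • P') t := fun k => by
  simpa only [coeff_add, coeff_smul, smul_eq_mul] using hc.fun_mul (hP k)

theorem sum {ι : Type*} {u : Finset ι} {P : ι → 𝕜 → 𝕜[X]} {P' : ι → 𝕜[X]}
    (h : ∀ i ∈ u, HasCoeffDerivAt (P i) (P' i) t) :
    HasCoeffDerivAt (fun s => ∑ i ∈ u, P i s) (∑ i ∈ u, P' i) t := fun k => by
  simpa only [finsetSum_coeff] using HasDerivAt.fun_sum fun i hi => h i hi k

theorem mul (hP : HasCoeffDerivAt P P' t) (hQ : HasCoeffDerivAt Q Q' t) :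
    HasCoeffDerivAt (fun s => P s * Q s) (P' * Q t + P t * Q') t := fun k => by
  simpa only [coeff_add, coeff_mul, ← Finset.sum_add_distrib] using
    HasDerivAt.fun_sum fun i _ => (hP i.1).fun_mul (hQ i.2)

theorem coeff_eq_zero_of_forall_eq (hP : HasCoeffDerivAt P P' t) {k : ℕ} {c : 𝕜}
    (hc : ∀ s, (P s).coeff k = c) : P'.coeff k = 0 :=
  (hP k).unique (by simpa only [hc] using hasDerivAt_const t c)

theorem hasDerivAt_map (hP : HasCoeffDerivAt P P' t) {N : ℕ} (hN : ∀ s, (P s).natDegree < N)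
    {L : 𝕜 → 𝕜[X] →ₗ[𝕜] 𝕜} {L' : 𝕜[X] →ₗ[𝕜] 𝕜}
    (hL : ∀ f, HasDerivAt (fun s => L s f) (L' f) t) :
    HasDerivAt (fun s => L s (P s)) (L t P' + L' (P t)) t := by
  have hN' : P'.natDegree < N := by
    refine Nat.lt_of_le_pred ((hN t).pos) (natDegree_le_iff_coeff_eq_zero.2 fun k hk => ?_)
    exact hP.coeff_eq_zero_of_forall_eq fun s =>
      coeff_eq_zero_of_natDegree_lt ((hN s).trans_le (Nat.le_of_pred_lt hk))
  have expand (M : 𝕜[X] →ₗ[𝕜] 𝕜) {f : 𝕜[X]} (hf : f.natDegree < N) :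
      M f = ∑ k ∈ Finset.range N, f.coeff k * M (X ^ k) := by
    simpa only [mul_one] using map_mul_eq_sum_coeff M hf 1
  simp only [expand _ (hN _), expand _ hN', ← Finset.sum_add_distrib]
  exact HasDerivAt.fun_sum fun k _ => (hP k).fun_mul (hL (X ^ k))

end HasCoeffDerivAt

variable {L : 𝕜 → 𝕜[X] →ₗ[𝕜] 𝕜} {L' : 𝕜[X] →ₗ[𝕜] 𝕜}
  (hL : ∀ f, HasDerivAt (fun s => L s f) (L' f) t)

theorem HasCoeffDerivAt.degree_lt_of_orthPoly {n : ℕ} {P' : 𝕜[X]}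
    (hP : HasCoeffDerivAt (fun s => orthPoly (L s) n) P' t) : P'.degree < n := by
  rw [degree_lt_iff_coeff_zero]
  intro k hk
  rcases hk.eq_or_lt with rfl | hk
  · exact hP.coeff_eq_zero_of_forall_eq fun s => coeff_orthPoly_self (L s) n
  · exact hP.coeff_eq_zero_of_forall_eq fun s => coeff_orthPoly_of_lt (L s) hk

include hL

theorem hasDerivAt_map_orthPoly_mul {m n : ℕ} {P' Q' : 𝕜[X]}
    (hP : HasCoeffDerivAt (fun s => orthPoly (L s) m) P' t)
    (hQ : HasCoeffDerivAt (fun s => orthPoly (L s) n) Q' t) :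
    HasDerivAt (fun s => L s (orthPoly (L s) m * orthPoly (L s) n))
      (L t (P' * orthPoly (L t) n + orthPoly (L t) m * Q') +
        L' (orthPoly (L t) m * orthPoly (L t) n)) t :=
  (hP.mul hQ).hasDerivAt_map (N := m + n + 1)
    (fun s => Nat.lt_succ_of_le (natDegree_mul_le.trans (by simp))) hL

theorem exists_hasCoeffDerivAt_orthPoly (hq : IsQuasiDefinite (L t)) (n : ℕ) :
    ∃ P', HasCoeffDerivAt (fun s => orthPoly (L s) n) P' t := by
  induction n using Nat.strong_induction_on with
  | _ n ih =>
    choose! P' hP' using ih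
    have hnum : ∀ j < n, DifferentiableAt 𝕜 (fun s => L s (orthPoly (L s) j * X ^ n)) t :=
      fun j hj => (((hP' j hj).mul (.const (X ^ n) t)).hasDerivAt_map (N := j + n + 1)
        (fun s => Nat.lt_succ_of_le (natDegree_mul_le.trans (by simp))) hL).differentiableAt
    have hden : ∀ j < n, DifferentiableAt 𝕜 (fun s => sqNorm (L s) j) t :=
      fun j hj => (hasDerivAt_map_orthPoly_mul hL (hP' j hj) (hP' j hj)).differentiableAt
    simp only [orthPoly_eq_sub_sum _ n]
    exact ⟨_, .sub (.const (X ^ n) t) (.sum fun j hj => .smul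
      ((hnum j (Finset.mem_range.1 hj)).fun_div (hden j (Finset.mem_range.1 hj)) (hq j)).hasDerivAt
      (hP' j (Finset.mem_range.1 hj)))⟩

theorem hasDerivAt_sqNorm (hq : IsQuasiDefinite (L t)) (n : ℕ) :
    HasDerivAt (fun s => sqNorm (L s) n) (L' (orthPoly (L t) n * orthPoly (L t) n)) t := by
  obtain ⟨P', hP'⟩ := exists_hasCoeffDerivAt_orthPoly hL hq n
  have horth : L t (orthPoly (L t) n * P') = 0 :=
    hq.map_orthPoly_mul_eq_zero hP'.degree_lt_of_orthPoly
  have h := hasDerivAt_map_orthPoly_mul hL hP' hP'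
  rwa [mul_comm P', map_add, horth, add_zero, zero_add] at h

theorem hasDerivAt_nextCoeff_orthPoly_succ (hq : ∀ᶠ s in 𝓝 t, IsQuasiDefinite (L s)) (n : ℕ) :
    HasDerivAt (fun s => (orthPoly (L s) (n + 1)).nextCoeff)
      (-(L' (orthPoly (L t) (n + 1) * orthPoly (L t) n) / sqNorm (L t) n)) t := by
  have hqt := hq.self_of_nhds
  obtain ⟨P', hP'⟩ := exists_hasCoeffDerivAt_orthPoly hL hqt (n + 1)
  obtain ⟨Q', hQ'⟩ := exists_hasCoeffDerivAt_orthPoly hL hqt n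
  have hP'deg : P'.natDegree ≤ n := natDegree_le_iff_coeff_eq_zero.2
    ((degree_lt_iff_coeff_zero _ _).1 hP'.degree_lt_of_orthPoly)
  have hQ'deg : Q'.degree < (n + 1 : ℕ) :=
    hQ'.degree_lt_of_orthPoly.trans (by exact_mod_cast n.lt_succ_self)
  have hconst : HasDerivAt (fun s => L s (orthPoly (L s) (n + 1) * orthPoly (L s) n)) 0 t :=
    (hasDerivAt_const t 0).congr_of_eventuallyEq
      (hq.mono fun s hs => hs.map_orthPoly_mul_orthPoly n.lt_succ_self)
  have hzero := (hasDerivAt_map_orthPoly_mul hL hP' hQ').unique hconst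
  rw [mul_comm P', map_add, hqt.map_orthPoly_mul hP'deg, hqt.map_orthPoly_mul_eq_zero hQ'deg,
    add_zero, add_eq_zero_iff_eq_neg, ← eq_div_iff (hqt n), neg_div] at hzero
  simpa only [nextCoeff_orthPoly_succ, hzero] using hP' n

theorem differentiableAt_det_hankelMatrix (n : ℕ) :
    DifferentiableAt 𝕜 (fun s => (hankelMatrix (L s) n).det) t := by
  simp only [Matrix.det_apply', hankelMatrix, Matrix.of_apply]
  exact .fun_sum fun σ _ =>
    (DifferentiableAt.fun_finsetProd fun i _ => (hL _).differentiableAt).const_mul _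

theorem logDeriv_det_hankelMatrix (hq : ∀ᶠ s in 𝓝 t, IsQuasiDefinite (L s)) (n : ℕ) :
    logDeriv (fun s => (hankelMatrix (L s) n).det) t =
      ∑ j ∈ Finset.range n, L' (orthPoly (L t) j * orthPoly (L t) j) / sqNorm (L t) j := by
  have hqt := hq.self_of_nhds
  have hdet : (fun s => (hankelMatrix (L s) n).det) =ᶠ[𝓝 t]
      fun s => ∏ j ∈ Finset.range n, sqNorm (L s) j :=
    hq.mono fun s hs => hs.det_hankelMatrix n
  rw [(logDeriv_congr_nhds hdet).eq_of_nhds, logDeriv_prod (fun j _ => hqt j)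
    fun j _ => (hasDerivAt_sqNorm hL hqt j).differentiableAt]
  exact Finset.sum_congr rfl fun j _ => by
    rw [logDeriv_apply, (hasDerivAt_sqNorm hL hqt j).deriv]

end Deformation

section BoundaryDeformation

variable {𝕜 : Type*} [NontriviallyNormedField 𝕜] {t w : 𝕜} {L : 𝕜 → 𝕜[X] →ₗ[𝕜] 𝕜}
  (hL : ∀ f, HasDerivAt (fun s => L s f) ((-w • leval t : 𝕜[X] →ₗ[𝕜] 𝕜) f) t)
include hL

theorem hasDerivAt_sqNorm_of_boundary (hq : IsQuasiDefinite (L t)) (n : ℕ) :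
    HasDerivAt (fun s => sqNorm (L s) n) (-(boundarySquare (L t) t w n * sqNorm (L t) n)) t := by
  refine (hasDerivAt_sqNorm hL hq n).congr_deriv ?_
  rw [boundarySquare, div_mul_cancel₀ _ (hq n)]
  simp only [LinearMap.smul_apply, leval_apply, eval_mul, smul_eq_mul]
  ring

theorem hasDerivAt_normRatio_of_boundary (hq : IsQuasiDefinite (L t)) (n : ℕ) :
    HasDerivAt (fun s => normRatio (L s) n)
      (normRatio (L t) n * (boundarySquare (L t) t w n - boundarySquare (L t) t w (n + 1))) t := by
  refine ((hasDerivAt_sqNorm_of_boundary hL hq (n + 1)).fun_div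
    (hasDerivAt_sqNorm_of_boundary hL hq n) (hq n)).congr_deriv ?_
  have := hq n
  rw [normRatio]
  field_simp
  ring

theorem hasDerivAt_nextCoeff_orthPoly_succ_of_boundary
    (hq : ∀ᶠ s in 𝓝 t, IsQuasiDefinite (L s)) (n : ℕ) :
    HasDerivAt (fun s => (orthPoly (L s) (n + 1)).nextCoeff) (boundaryCross (L t) t w n) t := by
  refine (hasDerivAt_nextCoeff_orthPoly_succ hL hq n).congr_deriv ?_
  simp only [LinearMap.smul_apply, leval_apply, eval_mul, smul_eq_mul, boundaryCross]
  ring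

theorem logDeriv_det_hankelMatrix_of_boundary (hq : ∀ᶠ s in 𝓝 t, IsQuasiDefinite (L s)) (n : ℕ) :
    logDeriv (fun s => (hankelMatrix (L s) n).det) t =
      -∑ j ∈ Finset.range n, boundarySquare (L t) t w j := by
  rw [logDeriv_det_hankelMatrix hL hq, ← Finset.sum_neg_distrib]
  refine Finset.sum_congr rfl fun j _ => ?_
  simp only [LinearMap.smul_apply, leval_apply, eval_mul, smul_eq_mul, boundarySquare]
  ring

end BoundaryDeformation

section TailFunctional

/-- The moment functional `f ↦ ∫_t^∞ f(x) w(x) dx`, extended linearly from the monomials so that it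
is linear even when some of the integrals diverge. -/
noncomputable def tailFunctional (w : ℝ → ℝ) (t : ℝ) : ℝ[X] →ₗ[ℝ] ℝ :=
  lsum fun k => (∫ x in Ioi t, x ^ k * w x) • LinearMap.id

/-- All moments of the weight `w` on `(t, ∞)` converge. -/
def HasTailMoments (w : ℝ → ℝ) (t : ℝ) : Prop :=
  ∀ k : ℕ, IntegrableOn (fun x => x ^ k * w x) (Ioi t)

theorem tailFunctional_monomial (w : ℝ → ℝ) (t : ℝ) (k : ℕ) (a : ℝ) :
    tailFunctional w t (monomial k a) = a * ∫ x in Ioi t, x ^ k * w x := by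
  simp [tailFunctional, lsum_apply, mul_comm]

theorem tailFunctional_X_pow (w : ℝ → ℝ) (t : ℝ) (k : ℕ) :
    tailFunctional w t (X ^ k) = ∫ x in Ioi t, x ^ k * w x := by
  rw [X_pow_eq_monomial, tailFunctional_monomial, one_mul]

namespace HasTailMoments

variable {w w' : ℝ → ℝ} {a t : ℝ}

theorem mono (h : HasTailMoments w a) (hat : a ≤ t) : HasTailMoments w t :=
  fun k => (h k).mono_set (Ioi_subset_Ioi hat)

theorem integrableOn_eval_mul (h : HasTailMoments w t) (f : ℝ[X]) :
    IntegrableOn (fun x => f.eval x * w x) (Ioi t) := by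
  induction f using Polynomial.induction_on' with
  | add f g hf hg =>
    simp only [eval_add, add_mul]
    exact hf.add hg
  | monomial k c =>
    simp only [eval_monomial, mul_assoc]
    exact (h k).const_mul c

theorem tailFunctional_apply (h : HasTailMoments w t) (f : ℝ[X]) :
    tailFunctional w t f = ∫ x in Ioi t, f.eval x * w x := by
  induction f using Polynomial.induction_on' with
  | add f g hf hg =>
    simp only [map_add, hf, hg, eval_add, add_mul]
    exact (integral_add (h.integrableOn_eval_mul f) (h.integrableOn_eval_mul g)).symm
  | monomial k c =>
    simp only [tailFunctional_monomial, eval_monomial, mul_assoc, integral_const_mul]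

theorem tailFunctional_mul_self_pos (h : HasTailMoments w t) (hw : ∀ x ∈ Ioi t, 0 < w x)
    {f : ℝ[X]} (hf : f ≠ 0) : 0 < tailFunctional w t (f * f) := by
  have hnonneg : 0 ≤ᵐ[volume.restrict (Ioi t)] fun x => (f * f).eval x * w x := by
    filter_upwards [ae_restrict_mem measurableSet_Ioi] with x hx
    rw [eval_mul]
    exact mul_nonneg (mul_self_nonneg _) (hw x hx).le
  have hsupport : Ioi t \ f.roots.toFinset ⊆
      Function.support (fun x => (f * f).eval x * w x) ∩ Ioi t := by
    rintro x ⟨hx, hroot⟩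
    have hfx : f.eval x ≠ 0 := fun h0 => hroot (by simp [hf, h0])
    exact ⟨by simpa [hfx] using (hw x hx).ne', hx⟩
  rw [h.tailFunctional_apply, setIntegral_pos_iff_support_of_nonneg_ae hnonneg
    (h.integrableOn_eval_mul _)]
  refine lt_of_lt_of_le ?_ (measure_mono hsupport)
  rw [measure_sdiff_null (Finset.measure_zero _ _), Real.volume_Ioi]
  exact ENNReal.zero_lt_top

theorem isQuasiDefinite (h : HasTailMoments w t) (hw : ∀ x ∈ Ioi t, 0 < w x) :
    IsQuasiDefinite (tailFunctional w t) :=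
  fun n => (h.tailFunctional_mul_self_pos hw (monic_orthPoly _ n).ne_zero).ne'

theorem hasDerivAt_tailFunctional (h : HasTailMoments w a) (hat : a < t) (hw : ContinuousAt w t)
    (f : ℝ[X]) : HasDerivAt (fun s => tailFunctional w s f)
      ((-w t • leval t : ℝ[X] →ₗ[ℝ] ℝ) f) t := by
  have hint := h.integrableOn_eval_mul f
  have hsplit : (fun s => tailFunctional w s f) =ᶠ[𝓝 t]
      fun s => tailFunctional w a f - ∫ x in a..s, f.eval x * w x := by
    filter_upwards [Ioi_mem_nhds hat] with s hs
    rw [h.tailFunctional_apply, (h.mono hs.le).tailFunctional_apply,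
      ← intervalIntegral.integral_Ioi_sub_Ioi hint hs.le, sub_sub_cancel]
  have hFTC := intervalIntegral.integral_hasDerivAt_right
    ((intervalIntegrable_iff_integrableOn_Ioc_of_le hat.le).2 (hint.mono_set Ioc_subset_Ioi_self))
    (AEStronglyMeasurable.stronglyMeasurableAtFilter_of_mem hint.aestronglyMeasurable
      (Ioi_mem_nhds hat))
    (f.continuous.continuousAt.mul hw)
  refine ((hFTC.const_sub _).congr_of_eventuallyEq hsplit).congr_deriv ?_
  simp [mul_comm]

theorem tailFunctional_derivative_add (h : HasTailMoments w t) (h' : HasTailMoments w' t)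
    (hw : ∀ x ∈ Ici t, HasDerivAt w (w' x) x) (f : ℝ[X]) :
    tailFunctional w t (derivative f) + tailFunctional w' t f = -(w t * f.eval t) := by
  have hderiv : ∀ x ∈ Ici t, HasDerivAt (fun x => f.eval x * w x)
      ((derivative f).eval x * w x + f.eval x * w' x) x :=
    fun x hx => (f.hasDerivAt x).fun_mul (hw x hx)
  have hint := h.integrableOn_eval_mul (derivative f)
  have hint' := h'.integrableOn_eval_mul f
  have hzero := tendsto_zero_of_hasDerivAt_of_integrableOn_Ioi
    (fun x hx => hderiv x (Ioi_subset_Ici_self hx)) (hint.add hint') (h.integrableOn_eval_mul f)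
  rw [h.tailFunctional_apply, h'.tailFunctional_apply, ← integral_add hint hint',
    integral_Ioi_of_hasDerivAt_of_tendsto' hderiv (hint.add hint') hzero, zero_sub, mul_comm]

end HasTailMoments

end TailFunctional

section LaguerreWeight

/-- The Laguerre weight `x ^ α * exp (-x)`, for an arbitrary real exponent `α`. -/
noncomputable def laguerreWeight (α x : ℝ) : ℝ := x ^ α * Real.exp (-x)

/-- The moment functional `f ↦ ∫_t^∞ f(x) x^α e^(-x) dx` of the truncated Laguerre weight. -/
noncomputable abbrev laguerreFunctional (α t : ℝ) : ℝ[X] →ₗ[ℝ] ℝ :=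
  tailFunctional (laguerreWeight α) t

variable {α t x : ℝ}

theorem laguerreWeight_pos (hx : 0 < x) : 0 < laguerreWeight α x :=
  mul_pos (Real.rpow_pos_of_pos hx _) (Real.exp_pos _)

theorem pow_mul_laguerreWeight (hx : 0 < x) (k : ℕ) :
    x ^ k * laguerreWeight α x = laguerreWeight (k + α) x := by
  rw [laguerreWeight, laguerreWeight, Real.rpow_add hx, Real.rpow_natCast, mul_assoc]

theorem hasDerivAt_laguerreWeight (hx : 0 < x) : HasDerivAt (laguerreWeight α)
    (α * laguerreWeight (α - 1) x - laguerreWeight α x) x := by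
  refine ((Real.hasDerivAt_rpow_const (p := α) (Or.inl hx.ne')).mul
    (hasDerivAt_neg x).exp).congr_deriv ?_
  simp only [laguerreWeight]
  ring

theorem integrableOn_laguerreWeight (ht : 0 < t) : IntegrableOn (laguerreWeight α) (Ioi t) := by
  have hcont : ContinuousOn (laguerreWeight α) (Ici t) := fun x hx =>
    (hasDerivAt_laguerreWeight (ht.trans_le hx)).continuousAt.continuousWithinAt
  refine integrable_of_isBigO_exp_neg (b := 1 / 2) one_half_pos hcont ?_
  refine (isLittleO_exp_mul_rpow_of_lt α (show (-1 : ℝ) < -(1 / 2) by norm_num)).isBigO.congr_left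
    fun x => ?_
  rw [laguerreWeight, neg_one_mul, mul_comm]

theorem integrableOn_laguerreWeight_zero (hα : -1 < α) :
    IntegrableOn (laguerreWeight α) (Ioi 0) := by
  refine (Real.GammaIntegral_convergent (neg_lt_iff_pos_add.1 hα)).congr_fun (fun x _ => ?_)
    measurableSet_Ioi
  rw [laguerreWeight, add_sub_cancel_right, mul_comm]

theorem hasTailMoments_laguerreWeight (α : ℝ) (ht : 0 < t) :
    HasTailMoments (laguerreWeight α) t := fun _ =>
  integrableOn_laguerreWeight ht |>.congr_fun
    (fun _ hx => (pow_mul_laguerreWeight (ht.trans hx) _).symm) measurableSet_Ioi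

theorem hasTailMoments_laguerreWeight_zero (hα : -1 < α) :
    HasTailMoments (laguerreWeight α) 0 := fun k =>
  integrableOn_laguerreWeight_zero (hα.trans_le (le_add_of_nonneg_left k.cast_nonneg)) |>.congr_fun
    (fun _ hx => (pow_mul_laguerreWeight hx _).symm) measurableSet_Ioi

theorem isLaguerrePair_laguerreFunctional (α : ℝ) (ht : 0 < t) :
    IsLaguerrePair α t (laguerreWeight α t) (laguerreFunctional (α - 1) t)
      (laguerreFunctional α t) where
  map_X_mul f := by
    have h := hasTailMoments_laguerreWeight α ht
    have h' := hasTailMoments_laguerreWeight (α - 1) ht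
    rw [h.tailFunctional_apply, h'.tailFunctional_apply]
    refine setIntegral_congr_fun measurableSet_Ioi fun x hx => ?_
    have hshift := pow_mul_laguerreWeight (α := α - 1) (ht.trans hx) 1
    rw [pow_one, Nat.cast_one, add_sub_cancel] at hshift
    simp only [eval_mul, eval_X, ← hshift]
    ring
  parts f := by
    have h := hasTailMoments_laguerreWeight α ht
    have h' := hasTailMoments_laguerreWeight (α - 1) ht
    have hderiv : HasTailMoments
        (fun x => α * laguerreWeight (α - 1) x - laguerreWeight α x) t := fun k => by
      simp only [mul_sub, mul_left_comm _ α]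
      exact ((h' k).const_mul α).sub (h k)
    rw [← h.tailFunctional_derivative_add hderiv
        (fun x hx => hasDerivAt_laguerreWeight (ht.trans_le hx)) f, hderiv.tailFunctional_apply,
      h'.tailFunctional_apply, h.tailFunctional_apply f, ← integral_const_mul, add_sub_assoc,
      ← integral_sub ((h'.integrableOn_eval_mul f).const_mul α) (h.integrableOn_eval_mul f)]
    simp only [mul_sub, mul_left_comm]

theorem isQuasiDefinite_laguerre (α : ℝ) (ht : 0 < t) :
    IsQuasiDefinite (laguerreFunctional α t) :=
  (hasTailMoments_laguerreWeight α ht).isQuasiDefinite fun _ hx => laguerreWeight_pos (ht.trans hx)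

theorem isQuasiDefinite_laguerre_zero (hα : -1 < α) :
    IsQuasiDefinite (laguerreFunctional α 0) :=
  (hasTailMoments_laguerreWeight_zero hα).isQuasiDefinite fun _ => laguerreWeight_pos

theorem eventually_isQuasiDefinite_laguerre (α : ℝ) (ht : 0 < t) :
    ∀ᶠ s in 𝓝 t, IsQuasiDefinite (laguerreFunctional α s) :=
  (eventually_gt_nhds ht).mono fun _ => isQuasiDefinite_laguerre α

theorem hasDerivAt_laguerreFunctional (α : ℝ) (ht : 0 < t) (f : ℝ[X]) :
    HasDerivAt (fun s => laguerreFunctional α s f)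
      ((-laguerreWeight α t • leval t : ℝ[X] →ₗ[ℝ] ℝ) f) t :=
  (hasTailMoments_laguerreWeight α (half_pos ht)).hasDerivAt_tailFunctional (half_lt_self ht)
    (hasDerivAt_laguerreWeight ht).continuousAt f

theorem laguerreHankel_eq_det (n : ℕ) (ht : 0 ≤ t) (α : ℝ) : laguerreHankel n t α =
    (hankelMatrix (laguerreFunctional α t) n).det := by
  rw [laguerreHankel]
  congr 1
  ext i j
  rw [hankelMatrix, Matrix.of_apply, Matrix.of_apply, tailFunctional_X_pow]
  refine setIntegral_congr_fun measurableSet_Ioi fun x hx => ?_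
  simp only [pow_mul_laguerreWeight (ht.trans_lt hx)]
  rw [laguerreWeight, Nat.cast_add]

theorem laguerreHankel_ne_zero (n : ℕ) (ht : 0 < t) (α : ℝ) : laguerreHankel n t α ≠ 0 := by
  rw [laguerreHankel_eq_det n ht.le]
  exact (isQuasiDefinite_laguerre α ht).det_hankelMatrix_ne_zero n

theorem laguerreHankel_zero_ne_zero (n : ℕ) (hα : -1 < α) : laguerreHankel n 0 α ≠ 0 := by
  rw [laguerreHankel_eq_det n le_rfl]
  exact (isQuasiDefinite_laguerre_zero hα).det_hankelMatrix_ne_zero n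

theorem laguerreHankel_eventuallyEq (n : ℕ) (ht : 0 < t) (α : ℝ) :
    (fun s => laguerreHankel n s α) =ᶠ[𝓝 t]
      fun s => (hankelMatrix (laguerreFunctional α s) n).det :=
  (eventually_gt_nhds ht).mono fun _ hs => laguerreHankel_eq_det n hs.le α

theorem differentiableAt_laguerreHankel (n : ℕ) (ht : 0 < t) (α : ℝ) :
    DifferentiableAt ℝ (fun s => laguerreHankel n s α) t :=
  (differentiableAt_det_hankelMatrix (hasDerivAt_laguerreFunctional α ht) n)
    |>.congr_of_eventuallyEq (laguerreHankel_eventuallyEq n ht α)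

end LaguerreWeight

section PainleveV

theorem sigmaForm_of_ladder {R : Type*} [CommRing R] {α β r t u v ν σ : R}
    (hcross : r ^ 2 = β * u * v) (hσ : β + (σ - ν * (ν + α)) = t * r)
    (hsum : β * (u + v) = β - ν * (ν + α) - (2 * ν + α) * r) :
    (β * (u - v)) ^ 2 =
      4 * r ^ 2 * (σ - ν * (ν + α) - t * r) + ((2 * ν + α - t) * r + σ) ^ 2 := by
  have hlin : σ - ν * (ν + α) - t * r = -β := by linear_combination hσ
  have hquad : (2 * ν + α - t) * r + σ = -(β * (u + v)) := by linear_combination hσ + hsum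
  calc (β * (u - v)) ^ 2 = (β * (u + v)) ^ 2 - 4 * β * (β * u * v) := by ring
    _ = 4 * r ^ 2 * (-β) + (-(β * (u + v))) ^ 2 := by rw [← hcross]; ring
    _ = _ := by rw [hlin, hquad]

/-- The function `n (n + α) + p`, where `p` is the subleading coefficient of the monic orthogonal
polynomial of degree `n` for the weight `x ^ α * exp (-x)` on `(t, ∞)`: a closed form of
`t * d/dt log D_n(t, α)`. -/
noncomputable def laguerreSigma (α : ℝ) (n : ℕ) (t : ℝ) : ℝ :=
  n * (n + α) + (orthPoly (laguerreFunctional α t) n).nextCoeff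

variable {t : ℝ}

theorem mul_logDeriv_laguerreHankel (α : ℝ) (n : ℕ) (ht : 0 < t) :
    t * logDeriv (fun s => laguerreHankel n s α) t = laguerreSigma α n t := by
  have hpair := isLaguerrePair_laguerreFunctional α ht
  have hq := isQuasiDefinite_laguerre α ht
  rw [(logDeriv_congr_nhds (laguerreHankel_eventuallyEq n ht α)).eq_of_nhds,
    logDeriv_det_hankelMatrix_of_boundary (hasDerivAt_laguerreFunctional α ht)
      (eventually_isQuasiDefinite_laguerre α ht), laguerreSigma]
  induction n with
  | zero => simp [nextCoeff_orthPoly_zero]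
  | succ n ih =>
    rw [Finset.sum_range_succ, neg_add, mul_add, ih, mul_neg, hpair.boundarySquare_eq hq]
    push_cast
    ring

theorem hasDerivAt_laguerreSigma_succ (α : ℝ) (n : ℕ) (ht : 0 < t) :
    HasDerivAt (laguerreSigma α (n + 1))
      (boundaryCross (laguerreFunctional α t) t (laguerreWeight α t) n) t :=
  (hasDerivAt_nextCoeff_orthPoly_succ_of_boundary (hasDerivAt_laguerreFunctional α ht)
    (eventually_isQuasiDefinite_laguerre α ht) n).const_add _

theorem hasDerivAt_boundaryCross_laguerre (α : ℝ) (n : ℕ) (ht : 0 < t) :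
    HasDerivAt
      (fun s => boundaryCross (laguerreFunctional α s) s (laguerreWeight α s) n)
      (normRatio (laguerreFunctional α t) n *
        (boundarySquare (laguerreFunctional α t) t (laguerreWeight α t) n -
          boundarySquare (laguerreFunctional α t) t (laguerreWeight α t) (n + 1)) / t) t := by
  have hderiv := hasDerivAt_laguerreFunctional α ht
  have hq := isQuasiDefinite_laguerre α ht
  have hcross {s : ℝ} (hs : 0 < s) :=
    (isLaguerrePair_laguerreFunctional α hs).normRatio_add_nextCoeff
      (isQuasiDefinite_laguerre α hs) n
  have hquot := ((hasDerivAt_normRatio_of_boundary hderiv hq n).fun_add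
    (hasDerivAt_nextCoeff_orthPoly_succ_of_boundary hderiv
      (eventually_isQuasiDefinite_laguerre α ht) n)).fun_div (hasDerivAt_id' t) ht.ne'
  refine (hquot.congr_of_eventuallyEq ?_).congr_deriv ?_
  · filter_upwards [Ioi_mem_nhds ht] with s hs
    rw [hcross hs, mul_div_cancel_left₀ _ (ne_of_gt hs)]
  · rw [hcross ht]
    field_simp
    ring

theorem laguerreSigma_sigmaForm (α : ℝ) (n : ℕ) : ∃ r q : ℝ → ℝ, ∀ t, 0 < t →
    HasDerivAt (laguerreSigma α n) (r t) t ∧ HasDerivAt r (q t) t ∧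
      (t * q t) ^ 2 = 4 * r t ^ 2 * (laguerreSigma α n t - n * (n + α) - t * r t) +
        ((2 * n + α - t) * r t + laguerreSigma α n t) ^ 2 := by
  cases n with
  | zero =>
    have hzero : laguerreSigma α 0 = 0 := by
      ext t
      simp [laguerreSigma, nextCoeff_orthPoly_zero]
    refine ⟨0, 0, fun t _ => ?_⟩
    simp [hzero]
  | succ n =>
    refine ⟨_, _, fun t ht => ⟨hasDerivAt_laguerreSigma_succ α n ht,
      hasDerivAt_boundaryCross_laguerre α n ht, ?_⟩⟩
    have hpair := isLaguerrePair_laguerreFunctional α ht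
    have hq := isQuasiDefinite_laguerre α ht
    rw [mul_div_cancel₀ _ ht.ne']
    exact sigmaForm_of_ladder (hq.boundaryCross_sq t (laguerreWeight α t) n)
      (by simpa only [laguerreSigma, add_sub_cancel_left] using hpair.normRatio_add_nextCoeff hq n)
      (by simpa using hpair.normRatio_mul_boundarySquare_add hq n)

theorem deriv_log_div_const {f : ℝ → ℝ} {c t : ℝ} (hf : DifferentiableAt ℝ f t) (hft : f t ≠ 0)
    (hc : c ≠ 0) : deriv (fun s => Real.log (f s / c)) t = logDeriv f t := by
  rw [← logDeriv_mul_const t c⁻¹ (inv_ne_zero hc)]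
  exact Real.deriv_log_comp_eq_logDeriv (hf.mul_const c⁻¹) (mul_ne_zero hft (inv_ne_zero hc))

end PainleveV

theorem laguerre_sigma_PV_general (α : ℝ) (n : ℕ) (H : ℝ → ℝ)
    (hH : ∀ t, 0 < t → H t = t * logDeriv (fun s => laguerreHankel n s α) t) :
    DifferentiableOn ℝ H (Ioi 0) ∧ DifferentiableOn ℝ (deriv H) (Ioi 0) ∧
    ∀ t : ℝ, 0 < t →
      (t * deriv (deriv H) t) ^ 2 =
        4 * (deriv H t) ^ 2 * (H t - (n : ℝ) * ((n : ℝ) + α) - t * deriv H t) +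
        ((2 * (n : ℝ) + α - t) * deriv H t + H t) ^ 2 := by
  obtain ⟨r, q, h⟩ := laguerreSigma_sigmaForm α n
  have hHσ : EqOn H (laguerreSigma α n) (Ioi 0) := fun t ht =>
    (hH t ht).trans (mul_logDeriv_laguerreHankel α n ht)
  have hHr : EqOn (deriv H) r (Ioi 0) := fun t ht =>
    (hHσ.deriv isOpen_Ioi ht).trans (h t ht).1.deriv
  have hHq : EqOn (deriv (deriv H)) q (Ioi 0) := fun t ht =>
    (hHr.deriv isOpen_Ioi ht).trans (h t ht).2.1.deriv
  refine ⟨.congr (fun t ht => (h t ht).1.differentiableAt.differentiableWithinAt) hHσ,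
    .congr (fun t ht => (h t ht).2.1.differentiableAt.differentiableWithinAt) hHr,
    fun t ht => ?_⟩
  rw [hHσ ht, hHr ht, hHq ht]
  exact (h t ht).2.2

theorem laguerre_sigma_PV (α : ℝ) (hα : -1 < α) (n : ℕ) (hn : 1 ≤ n) (H : ℝ → ℝ)
    (hH : ∀ t : ℝ, H t =
      t * deriv (fun s => Real.log (laguerreHankel n s α / laguerreHankel n 0 α)) t) :
    DifferentiableOn ℝ H (Set.Ioi 0) ∧ DifferentiableOn ℝ (deriv H) (Set.Ioi 0) ∧
    ∀ t : ℝ, 0 < t →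
      (t * deriv (deriv H) t) ^ 2 =
        4 * (deriv H t) ^ 2 * (H t - (n : ℝ) * ((n : ℝ) + α) - t * deriv H t) +
        ((2 * (n : ℝ) + α - t) * deriv H t + H t) ^ 2 :=
  laguerre_sigma_PV_general α n H fun t ht => by
    rw [hH, deriv_log_div_const (differentiableAt_laguerreHankel n ht α)
      (laguerreHankel_ne_zero n ht α) (laguerreHankel_zero_ne_zero n hα)]
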